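/- Let G be a 1-dimensional simplicial complex on vertex set Fin n (i.e. a graph, with G_1 its edges and G_0 its vertices) with incidence matrix ∂, and let (F,R) be a rooted forest of G. Then (F,R) has exactly one fitting orientation: there is a unique bijection φ : R̄ → F such that r ⊆ φ(r) for every r ∈ R̄. -/

import Mathlib

open Finset

/-- `G` is a `d`-dimensional simplicial complex on vertex set `Fin n`. -/
def IsComplex (n d : ℕ) (G : Finset (Finset (Fin n))) : Prop :=
  (∀ f ∈ G, ∀ g ⊆ f, g ∈ G) ∧ (∀ f ∈ G, f.card ≤ d + 1) ∧ ∃ f ∈ G, f.card = d + 1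

/-- The `k`-dimensional faces of `G` (faces of cardinality `k+1`). -/
def faces {n : ℕ} (G : Finset (Finset (Fin n))) (k : ℕ) : Finset (Finset (Fin n)) :=
  G.filter fun f => f.card = k + 1

/-- Incidence entry `∂[r,f]`: equals `(-1)^j` if `r` is obtained from `f` by deleting
its `j`-th smallest element (indexing from 0), and `0` if `r ⊄ f`. -/
def incEntry {n : ℕ} (r f : Finset (Fin n)) : ℤ :=
  if r ⊆ f then
    (-1 : ℤ) ^ ((f \ r).sum fun v => (f.filter fun w => w < v).card)
  else 0

/-- `F` is a forest of the `d`-dimensional complex `G`: the columns of the incidence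
matrix indexed by `F` are linearly independent over `ℚ`. -/
def IsForest (n d : ℕ) (G F : Finset (Finset (Fin n))) : Prop :=
  F ⊆ faces G d ∧
    LinearIndependent ℚ fun f : F => fun r : faces G (d - 1) => (incEntry r.1 f.1 : ℚ)

/-- `R` is a root of `F`: the rows indexed by `R̄ = G_{d-1} \ R` of the submatrix of the
incidence matrix with column set `F` are linearly independent and span the row space of
that submatrix. -/
def IsRoot (n d : ℕ) (G F R : Finset (Finset (Fin n))) : Prop :=
  R ⊆ faces G (d - 1) ∧
    LinearIndependent ℚ
      (fun r : (faces G (d - 1) \ R : Finset (Finset (Fin n))) =>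
        fun f : F => (incEntry r.1 f.1 : ℚ)) ∧
    Submodule.span ℚ
        (Set.range fun r : (faces G (d - 1) \ R : Finset (Finset (Fin n))) =>
          fun f : F => (incEntry r.1 f.1 : ℚ)) =
      Submodule.span ℚ
        (Set.range fun r : (faces G (d - 1) : Finset (Finset (Fin n))) =>
          fun f : F => (incEntry r.1 f.1 : ℚ))

/-- `(F,R)` is a rooted forest of the `d`-dimensional complex `G`. -/
def IsRootedForest (n d : ℕ) (G F R : Finset (Finset (Fin n))) : Prop :=
  IsForest n d G F ∧ IsRoot n d G F R

/-!
Let `M = ∂_{R̄,F}`, a nonsingular square matrix, and read `r ⊆ f` as `∂[r,f] ≠ 0`. Some term of the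
Leibniz expansion of `det M` is nonzero, which gives a fitting orientation `φ`. Let `ψ` be another
one. Relabel the columns by `φ`, so that `φ` becomes the identity and `ψ` a permutation `σ`, and let
`S` be the set of indices moved by `σ`. A column `j ∈ S` has nonzero entries in the rows `j` and
`σ⁻¹ j`, both in `S`; as an edge has only two endpoints, these are all its nonzero entries, and they
are `1` and `-1`. So `M` is block triangular, and the rows of its `S × S` block sum to zero, which
contradicts `det M ≠ 0` if `S` is nonempty.
-/

section Matrix

open Matrix Equiv Function

variable {m n ι κ R K : Type*}

lemma det_eq_zero_of_sum_col_eq_zero [Fintype m] [DecidableEq m] [Nonempty m] [CommRing R]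
    {M : Matrix m m R} (hM : ∀ j, ∑ i, M i j = 0) : M.det = 0 := by
  obtain ⟨i⟩ := ‹Nonempty m›
  have hker : 1 ᵥ* M = 0 := funext fun j => by simpa [vecMul, dotProduct] using hM j
  have hdet : 1 ᵥ* (M * M.adjugate) = 0 := by rw [← vecMul_vecMul, hker, zero_vecMul]
  simpa [mul_adjugate, vecMul_smul] using congrFun hdet i

lemma exists_perm_forall_apply_ne_zero [Fintype m] [DecidableEq m] [CommRing R]
    {M : Matrix m m R} (hM : M.det ≠ 0) : ∃ σ : Perm m, ∀ i, M i (σ i) ≠ 0 := by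
  rw [← det_transpose, det_apply] at hM
  obtain ⟨σ, -, hσ⟩ := exists_ne_zero_of_sum_ne_zero hM
  refine ⟨σ, fun i hi => hσ ?_⟩
  rw [prod_eq_zero (mem_univ i) hi, smul_zero]

lemma card_eq_of_rows_basis [Finite m] [Fintype n] [Fintype ι] [Field K] {A : Matrix m n K}
    {e : ι → m} (hcol : LinearIndependent K A.col) (hrow : LinearIndependent K (A.row ∘ e))
    (hspan : Submodule.span K (Set.range (A.row ∘ e)) = Submodule.span K (Set.range A.row)) :
    Fintype.card ι = Fintype.card n := by
  cases nonempty_fintype m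
  calc Fintype.card ι = Module.finrank K (Submodule.span K (Set.range (A.row ∘ e))) :=
        (finrank_span_eq_card hrow).symm
    _ = A.rank := by rw [hspan, A.rank_eq_finrank_span_row]
    _ = Fintype.card n := by rw [← A.rank_transpose, LinearIndependent.rank_matrix hcol]

/-- The matrices shaped like the incidence matrix of a directed graph with some of its vertex rows
deleted: each column has at most two nonzero entries, and if it has two, then they sum to zero. -/
def IsReducedIncidence [AddMonoid R] (A : Matrix m n R) : Prop :=
  ∀ ⦃i i' j⦄, i ≠ i' → A i j ≠ 0 → A i' j ≠ 0 →
    A i j + A i' j = 0 ∧ ∀ k, A k j ≠ 0 → k = i ∨ k = i'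

namespace IsReducedIncidence

lemma submatrix [AddMonoid R] {A : Matrix m n R} (hA : IsReducedIncidence A) {r : ι → m}
    (hr : r.Injective) (c : κ → n) : IsReducedIncidence (A.submatrix r c) := by
  intro i i' j hii' hi hi'
  obtain ⟨hsum, hall⟩ := hA (hr.ne hii') hi hi'
  exact ⟨hsum, fun k hk => (hall (r k) hk).imp (@hr k i) (@hr k i')⟩

lemma eq_or_eq_symm_of_apply_ne_zero [AddMonoid R] {M : Matrix m m R} (hM : IsReducedIncidence M)
    (hdiag : ∀ i, M i i ≠ 0) {σ : Perm m} (hσ : ∀ i, M i (σ i) ≠ 0) {i j : m} (hj : σ j ≠ j)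
    (hij : M i j ≠ 0) : i = j ∨ i = σ.symm j := by
  have hne : j ≠ σ.symm j := mt σ.eq_symm_apply.1 hj
  exact (hM hne (hdiag j) (by simpa using hσ (σ.symm j))).2 i hij

variable [Fintype m]

lemma sum_moved_eq_zero [DecidableEq m] [AddCommMonoid R] {M : Matrix m m R}
    (hM : IsReducedIncidence M) (hdiag : ∀ i, M i i ≠ 0) {σ : Perm m} (hσ : ∀ i, M i (σ i) ≠ 0)
    (j : {j // σ j ≠ j}) : ∑ i : {i // σ i ≠ i}, M i j = 0 := by
  obtain ⟨j, hj⟩ := j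
  have hne : j ≠ σ.symm j := mt σ.eq_symm_apply.1 hj
  have hj' : σ (σ.symm j) ≠ σ.symm j := by simpa using hne
  rw [Fintype.sum_eq_add ⟨j, hj⟩ ⟨σ.symm j, hj'⟩ (by simpa using hne)]
  · exact (hM hne (hdiag j) (by simpa using hσ (σ.symm j))).1
  · rintro i ⟨hij, hij'⟩
    by_contra h
    rcases hM.eq_or_eq_symm_of_apply_ne_zero hdiag hσ hj h with h | h
    · exact hij (Subtype.ext h)
    · exact hij' (Subtype.ext h)

lemma eq_one_of_forall_apply_ne_zero [DecidableEq m] [CommRing R] {M : Matrix m m R}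
    (hM : IsReducedIncidence M) (hdet : M.det ≠ 0) (hdiag : ∀ i, M i i ≠ 0) {σ : Perm m}
    (hσ : ∀ i, M i (σ i) ≠ 0) : σ = 1 := by
  by_contra hne
  obtain ⟨i₀, hi₀⟩ : ∃ i, σ i ≠ i := by
    contrapose! hne
    exact Perm.ext hne
  have : Nonempty {i // σ i ≠ i} := ⟨⟨i₀, hi₀⟩⟩
  have htriangular : ∀ i, ¬σ i ≠ i → ∀ j, σ j ≠ j → M i j = 0 := by
    intro i hi j hj
    by_contra h
    rcases hM.eq_or_eq_symm_of_apply_ne_zero hdiag hσ hj h with rfl | rfl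
    · exact hi hj
    · exact hi (by simpa using mt σ.eq_symm_apply.1 hj)
  have hblock : (M.toSquareBlockProp fun i => σ i ≠ i).det = 0 :=
    det_eq_zero_of_sum_col_eq_zero (hM.sum_moved_eq_zero hdiag hσ)
  exact hdet (by rw [M.twoBlockTriangular_det _ htriangular, hblock, zero_mul])

theorem existsUnique_perm [DecidableEq m] [CommRing R] {M : Matrix m m R}
    (hM : IsReducedIncidence M) (hdet : M.det ≠ 0) : ∃! σ : Perm m, ∀ i, M i (σ i) ≠ 0 := by
  obtain ⟨σ, hσ⟩ := exists_perm_forall_apply_ne_zero hdet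
  refine ⟨σ, hσ, fun τ hτ => ?_⟩
  have hdet' : (M.submatrix id σ).det ≠ 0 := by
    rcases Int.units_eq_one_or (Perm.sign σ) with h | h <;> simpa [det_permute', h] using hdet
  have hone : σ⁻¹ * τ = 1 :=
    (hM.submatrix injective_id σ).eq_one_of_forall_apply_ne_zero hdet' hσ
      fun i => by simpa using hτ i
  exact (inv_mul_eq_one.1 hone).symm

theorem existsUnique_equiv [Fintype n] [Field K] {A : Matrix m n K} (hA : IsReducedIncidence A)
    (hrow : LinearIndependent K A.row) (hcard : Fintype.card m = Fintype.card n) :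
    ∃! φ : m ≃ n, ∀ i, A i (φ i) ≠ 0 := by
  classical
  let e : m ≃ n := Fintype.equivOfCardEq hcard
  have hdet : (A.submatrix id e).det ≠ 0 := by
    have hrow' : LinearIndependent K (A.submatrix id e).row :=
      hrow.map' (LinearEquiv.funCongrLeft K K e).toLinearMap (LinearEquiv.ker _)
    exact ((isUnit_iff_isUnit_det _).1 (linearIndependent_rows_iff_isUnit.1 hrow')).ne_zero
  obtain ⟨σ, hσ, hunique⟩ := (hA.submatrix injective_id e).existsUnique_perm hdet
  refine ⟨σ.trans e, hσ, fun φ hφ => ?_⟩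
  rw [← hunique (φ.trans e.symm) fun i => by simpa using hφ i]
  ext i
  simp

end IsReducedIncidence

end Matrix

section Incidence

variable {n : ℕ}

lemma incEntry_ne_zero_iff {r f : Finset (Fin n)} : incEntry r f ≠ 0 ↔ r ⊆ f := by
  simp [incEntry]

lemma incEntry_singleton_add_incEntry_singleton {a b : Fin n} (hab : a ≠ b) :
    incEntry {a} {a, b} + incEntry {b} {a, b} = 0 := by
  wlog hlt : a < b generalizing a b
  · rw [pair_comm, add_comm]
    exact this hab.symm (hab.lt_or_gt.resolve_left hlt)
  have hdiff_left : ({a, b} : Finset (Fin n)) \ {a} = {b} := by grind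
  have hdiff_right : ({a, b} : Finset (Fin n)) \ {b} = {a} := by grind
  simp [incEntry, hdiff_left, hdiff_right, filter_insert, filter_singleton, hlt, hlt.not_gt]

/-- The submatrix `∂_{V,F}` of the incidence matrix, with rational entries; its rows and columns are
indexed by the elements of `V` and `F`, whichever complex these faces come from. -/
def incidenceMatrix (V F : Finset (Finset (Fin n))) : Matrix V F ℚ :=
  Matrix.of fun r f => (incEntry r.1 f.1 : ℚ)

variable {V F : Finset (Finset (Fin n))}

lemma incidenceMatrix_apply_ne_zero_iff {r : V} {f : F} :
    incidenceMatrix V F r f ≠ 0 ↔ r.1 ⊆ f.1 := by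
  simp [incidenceMatrix, ← incEntry_ne_zero_iff]

lemma isReducedIncidence_incidenceMatrix (hV : ∀ v ∈ V, #v = 1) (hF : ∀ f ∈ F, #f = 2) :
    IsReducedIncidence (incidenceMatrix V F) := by
  rintro ⟨r, hr⟩ ⟨s, hs⟩ ⟨f, hf⟩ hrs hrf hsf
  simp only [incidenceMatrix_apply_ne_zero_iff] at hrf hsf ⊢
  obtain ⟨a, rfl⟩ := card_eq_one.1 (hV r hr)
  obtain ⟨b, rfl⟩ := card_eq_one.1 (hV s hs)
  have hab : a ≠ b := by simpa using hrs
  obtain rfl : {a, b} = f := eq_of_subset_of_card_le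
    (insert_subset (singleton_subset_iff.1 hrf) hsf) (by rw [hF f hf, card_pair hab])
  constructor
  · simpa [incidenceMatrix] using mod_cast incEntry_singleton_add_incEntry_singleton hab
  · rintro ⟨t, ht⟩ htf
    obtain ⟨c, rfl⟩ := card_eq_one.1 (hV t ht)
    simpa using htf

end Incidence

lemma IsRootedForest.card_eq {n d : ℕ} {G F R : Finset (Finset (Fin n))}
    (hFR : IsRootedForest n d G F R) :
    Fintype.card (faces G (d - 1) \ R : Finset (Finset (Fin n))) = Fintype.card F := by
  obtain ⟨⟨-, hcol⟩, -, hrow, hspan⟩ := hFR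
  exact card_eq_of_rows_basis (A := incidenceMatrix (faces G (d - 1)) F)
    (e := Set.inclusion sdiff_subset) hcol hrow hspan

theorem unique_fittingOrientation_of_dim_one_general {n : ℕ} {G F R : Finset (Finset (Fin n))}
    (hFR : IsRootedForest n 1 G F R) :
    ∃! φ : (faces G (1 - 1) \ R : Finset (Finset (Fin n))) ≃ F, ∀ r, r.1 ⊆ (φ r).1 := by
  have hinc : IsReducedIncidence (incidenceMatrix (faces G (1 - 1) \ R) F) :=
    isReducedIncidence_incidenceMatrix (fun _ hv => (mem_filter.1 (sdiff_subset hv)).2)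
      fun _ hf => (mem_filter.1 (hFR.1.1 hf)).2
  simpa only [incidenceMatrix_apply_ne_zero_iff] using
    hinc.existsUnique_equiv hFR.2.2.1 hFR.card_eq

/-- For a 1-dimensional simplicial complex `G` (a graph), every rooted
forest `(F,R)` has exactly one fitting orientation: there is a unique bijection
`φ : R̄ → F` with `r ⊆ φ(r)` for every `r ∈ R̄`. -/
theorem unique_fittingOrientation_of_dim_one
    (n : ℕ) (hn : 1 ≤ n)
    (G : Finset (Finset (Fin n))) (hG : IsComplex n 1 G)
    (F R : Finset (Finset (Fin n))) (hFR : IsRootedForest n 1 G F R) :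
    ∃! φ : (faces G (1 - 1) \ R : Finset (Finset (Fin n))) ≃ F,
      ∀ r, r.1 ⊆ (φ r).1 :=
  unique_fittingOrientation_of_dim_one_general hFR
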